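/- Let s, m, c be positive integers with m + c ≤ s, and let q be a prime power. Let A and B be independent random matrices, each distributed uniformly over the s×s matrices with entries in F_q. Let X and Y be fixed m×s matrices over F_q and Λ and Θ be fixed c×s matrices over F_q such that the (c+m)×s matrix obtained by vertically stacking Λ on top of Y has rank c+m, and the (c+m)×s matrix obtained by vertically stacking Θ on top of X has rank c+m. Then the conditional Shannon entropy in base q satisfies H_q(A | (A+B)Xᵀ, Y·B, Λ·(A+B), B·Θᵀ) ≥ s² − (m+c)². -/

import Mathlib

open Finset Matrix

/-- `pr p X x` is the probability that the random variable `X` (on a finite sample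
space with probability mass function `p`) takes the value `x`. -/
noncomputable def pr {Ω α : Type*} [Fintype Ω] [DecidableEq α]
    (p : Ω → ℝ) (X : Ω → α) (x : α) : ℝ :=
  ∑ ω, if X ω = x then p ω else 0

/-- Shannon entropy in base `q` of the random variable `X`. -/
noncomputable def Hq {Ω α : Type*} [Fintype Ω] [Fintype α] [DecidableEq α]
    (q : ℕ) (p : Ω → ℝ) (X : Ω → α) : ℝ :=
  -∑ x : α, pr p X x * Real.logb q (pr p X x)

/-- Conditional Shannon entropy in base `q`: `H_q(X | Y) = H_q(X, Y) - H_q(Y)`. -/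
noncomputable def condHq {Ω α β : Type*} [Fintype Ω] [Fintype α] [Fintype β]
    [DecidableEq α] [DecidableEq β]
    (q : ℕ) (p : Ω → ℝ) (X : Ω → α) (Y : Ω → β) : ℝ :=
  Hq q p (fun ω => (X ω, Y ω)) - Hq q p Y

/-- Entropy of a linear image of the uniform distribution is the rank. -/
theorem Hq_linear {K G H : Type*} [Field K] [Fintype K] [AddCommGroup G] [Module K G]
    [AddCommGroup H] [Module K H] [Fintype G] [Fintype H] [DecidableEq H]
    (f : G →ₗ[K] H) :
    Hq (Fintype.card K) (fun _ : G => (1 : ℝ) / Fintype.card G) (fun ω => f ω) =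
      Module.finrank K (LinearMap.range f) := by
  classical
  have hq1 : (1 : ℝ) < Fintype.card K := by exact_mod_cast Fintype.one_lt_card
  have hq0 : (0 : ℝ) < Fintype.card K := by linarith
  set r := Module.finrank K (LinearMap.range f) with hr
  have hpr : ∀ x : H, pr (fun _ : G => (1 : ℝ) / Fintype.card G) (fun ω => f ω) x =
      if x ∈ LinearMap.range f then ((Fintype.card K : ℝ) ^ r)⁻¹ else 0 := by
    intro x
    have h1 : pr (fun _ : G => (1 : ℝ) / Fintype.card G) (fun ω => f ω) x =
        (#{ω : G | f ω = x} : ℝ) * (1 / Fintype.card G) := by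
      unfold pr
      rw [← Finset.sum_filter, Finset.sum_const, nsmul_eq_mul]
    rw [h1]
    split_ifs with hx
    · have h2 : #{ω : G | f ω = x} = #{ω : G | f ω = 0} :=
        AddMonoidHom.card_fiber_eq_of_mem_range f.toAddMonoidHom
          (by obtain ⟨y, hy⟩ := hx; exact ⟨y, hy⟩) ⟨0, map_zero f⟩
      have h3 : #{ω : G | f ω = 0} = Fintype.card K ^ Module.finrank K (LinearMap.ker f) := by
        rw [← Module.card_eq_pow_finrank (K := K) (V := LinearMap.ker f)]
        rw [Fintype.card_subtype]
        simp [LinearMap.mem_ker]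
      have h4 := LinearMap.finrank_range_add_finrank_ker f
      rw [h2, h3, Module.card_eq_pow_finrank (K := K) (V := G), ← h4, ← hr]
      push_cast
      rw [pow_add]
      field_simp
    · have : ({ω : G | f ω = x} : Finset G) = ∅ := by
        ext ω
        simp only [Finset.mem_filter, Finset.mem_univ, true_and, Finset.notMem_empty, iff_false]
        intro h
        exact hx ⟨ω, h⟩
      simp [this]
  unfold Hq
  simp only [hpr]
  have h5 : ∀ x : H, ((if x ∈ LinearMap.range f then ((Fintype.card K : ℝ) ^ r)⁻¹ else 0) *
      Real.logb (Fintype.card K)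
        (if x ∈ LinearMap.range f then ((Fintype.card K : ℝ) ^ r)⁻¹ else 0)) =
      if x ∈ LinearMap.range f then -(((Fintype.card K : ℝ) ^ r)⁻¹ * r) else 0 := by
    intro x
    split_ifs with hx
    · rw [Real.logb_inv, Real.logb_pow, Real.logb_self_eq_one hq1]
      ring
    · simp
  rw [Finset.sum_congr rfl (fun x _ => h5 x), ← Finset.sum_filter, Finset.sum_const,
    ← Fintype.card_subtype]
  have h6 := Module.card_eq_pow_finrank (K := K) (V := LinearMap.range f)
  have h7 : Fintype.card {x // x ∈ LinearMap.range f} = Fintype.card K ^ r := by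
    rw [hr, ← h6]
  rw [h7, nsmul_eq_mul]
  push_cast
  field_simp

/-- Dimension bound for the matrices killed on the left by `M` and on the right by `Nᵀ`. -/
theorem finrank_two_sided {K : Type*} [Field K] {ι : Type*} [Fintype ι] [DecidableEq ι]
    {s r : ℕ} (M N : Matrix ι (Fin s) K) (hM : M.rank = r) (hN : N.rank = r)
    (S : Submodule K (Matrix (Fin s) (Fin s) K))
    (hS : ∀ B ∈ S, M * B = 0 ∧ B * Nᵀ = 0) :
    Module.finrank K S ≤ (s - r) * (s - r) := by
  obtain ⟨W, hW⟩ : ∃ W, W = LinearMap.range (Nᵀ).mulVecLin := ⟨_, rfl⟩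
  obtain ⟨U, hU⟩ : ∃ U, U = LinearMap.ker M.mulVecLin := ⟨_, rfl⟩
  have hWr : Module.finrank K W = r := by
    rw [← hN, ← Matrix.rank_transpose, hW]; rfl
  have hQ : Module.finrank K ((Fin s → K) ⧸ W) = s - r := by
    have := Submodule.finrank_quotient_add_finrank W
    rw [Module.finrank_fin_fun] at this
    omega
  have hUr : Module.finrank K U = s - r := by
    have := LinearMap.finrank_range_add_finrank_ker M.mulVecLin
    rw [Module.finrank_fin_fun, ← hU] at this
    have h2 : Module.finrank K (LinearMap.range M.mulVecLin) = r := hM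
    omega
  let φ : S →ₗ[K] (((Fin s → K) ⧸ W) →ₗ[K] U) :=
    { toFun := fun B => W.liftQ ((B.1.mulVecLin).codRestrict U (by
          intro v
          simp [hU, LinearMap.mem_ker, (hS B.1 B.2).1])) (by
          rw [hW]
          rintro _ ⟨v, rfl⟩
          rw [LinearMap.mem_ker]
          apply Subtype.ext
          change B.1 *ᵥ (Nᵀ *ᵥ v) = 0
          rw [Matrix.mulVec_mulVec, (hS B.1 B.2).2, Matrix.zero_mulVec])
      map_add' := by
        intro B C
        refine Submodule.linearMap_qext _ (LinearMap.ext fun v => Subtype.ext ?_)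
        exact Matrix.add_mulVec B.1 C.1 v
      map_smul' := by
        intro a B
        refine Submodule.linearMap_qext _ (LinearMap.ext fun v => Subtype.ext ?_)
        exact Matrix.smul_mulVec a B.1 v }
  have hφ : Function.Injective φ := by
    intro B C h
    apply Subtype.ext
    apply Matrix.mulVec_injective
    funext v
    exact congrArg (fun g => (g (W.mkQ v)).1) h
  have := LinearMap.finrank_le_finrank_of_injective hφ
  rw [Module.finrank_linearMap, hQ, hUr] at this
  exact this

/-- Let `A, B` be independent uniformly random `s × s` matrices over the finite
field with `q` elements (modelled by the uniform distribution on pairs).  Let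
`X, Y` be fixed `m × s` matrices and `Λ, Θ` fixed `c × s` matrices such that the
stackings `Λ ‖ Y` and `Θ ‖ X` both have rank `c + m`.  Then
`H_q(A | (A+B)Xᵀ, Y·B, Λ·(A+B), B·Θᵀ) ≥ s² − (m+c)²`. -/
theorem stmt3 (s m c q : ℕ) (hs : 0 < s) (hm : 0 < m) (hc : 0 < c)
    (hmc : m + c ≤ s)
    (K : Type) [Field K] [Fintype K] [DecidableEq K] (hq : Fintype.card K = q)
    (X Y : Matrix (Fin m) (Fin s) K) (Λ Θ : Matrix (Fin c) (Fin s) K)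
    (hΛY : (Matrix.fromRows Λ Y).rank = c + m)
    (hΘX : (Matrix.fromRows Θ X).rank = c + m) :
    (s : ℝ) ^ 2 - ((m : ℝ) + c) ^ 2 ≤
      condHq q
        (fun _ : Matrix (Fin s) (Fin s) K × Matrix (Fin s) (Fin s) K =>
          (1 : ℝ) / Fintype.card (Matrix (Fin s) (Fin s) K × Matrix (Fin s) (Fin s) K))
        (fun ω => ω.1)
        (fun ω => ((ω.1 + ω.2) * Xᵀ, Y * ω.2, Λ * (ω.1 + ω.2), ω.2 * Θᵀ)) := by
  subst hq
  let f : (Matrix (Fin s) (Fin s) K × Matrix (Fin s) (Fin s) K) →ₗ[K]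
      (Matrix (Fin s) (Fin m) K × Matrix (Fin m) (Fin s) K × Matrix (Fin c) (Fin s) K ×
        Matrix (Fin s) (Fin c) K) :=
    { toFun := fun ω => ((ω.1 + ω.2) * Xᵀ, Y * ω.2, Λ * (ω.1 + ω.2), ω.2 * Θᵀ)
      map_add' := by
        intro a b
        simp only [Prod.fst_add, Prod.snd_add, Prod.mk_add_mk, Matrix.add_mul, Matrix.mul_add]
        refine Prod.ext ?_ (Prod.ext ?_ (Prod.ext ?_ ?_)) <;> simp <;> abel
      map_smul' := by
        intro a b
        simp [Matrix.add_mul, Matrix.mul_add] }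
  let g := (LinearMap.fst K (Matrix (Fin s) (Fin s) K) (Matrix (Fin s) (Fin s) K)).prod f
  have hf := Hq_linear f
  letI : DecidableEq (Matrix (Fin s) (Fin s) K × (Matrix (Fin s) (Fin m) K ×
      Matrix (Fin m) (Fin s) K × Matrix (Fin c) (Fin s) K × Matrix (Fin s) (Fin c) K)) :=
    @instDecidableEqProd _ _ inferInstance inferInstance
  have hg := Hq_linear g
  have hcond : condHq (Fintype.card K)
        (fun _ : Matrix (Fin s) (Fin s) K × Matrix (Fin s) (Fin s) K =>
          (1 : ℝ) / Fintype.card (Matrix (Fin s) (Fin s) K × Matrix (Fin s) (Fin s) K))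
        (fun ω => ω.1)
        (fun ω => ((ω.1 + ω.2) * Xᵀ, Y * ω.2, Λ * (ω.1 + ω.2), ω.2 * Θᵀ)) =
      (Module.finrank K (LinearMap.range g) : ℝ) - Module.finrank K (LinearMap.range f) := by
    rw [← hf, ← hg]; rfl
  rw [hcond]
  have h1 : Module.finrank K (LinearMap.range f) ≤ s * m + (m * s + (c * s + s * c)) := by
    refine (Submodule.finrank_le _).trans (le_of_eq ?_)
    simp [Module.finrank_prod, Module.finrank_matrix]
  have h2 := LinearMap.finrank_range_add_finrank_ker g
  have h3 : Module.finrank K (Matrix (Fin s) (Fin s) K × Matrix (Fin s) (Fin s) K)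
      = s * s + s * s := by
    simp [Module.finrank_prod, Module.finrank_matrix]
  have hk : ∀ ω ∈ LinearMap.ker g, ω.1 = 0 ∧ ω.2 * Xᵀ = 0 ∧ Y * ω.2 = 0 ∧ Λ * ω.2 = 0 ∧
      ω.2 * Θᵀ = 0 := by
    intro ω hω
    have h : (ω.1, ((ω.1 + ω.2) * Xᵀ, Y * ω.2, Λ * (ω.1 + ω.2), ω.2 * Θᵀ)) = 0 := hω
    simp only [Prod.mk_eq_zero] at h
    obtain ⟨h0, hx, hy, hl, ht⟩ := h
    rw [h0, zero_add] at hx hl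
    exact ⟨h0, hx, hy, hl, ht⟩
  have h4 : Module.finrank K (LinearMap.ker g) ≤ (s - (c + m)) * (s - (c + m)) := by
    let S := (LinearMap.ker g).map
      (LinearMap.snd K (Matrix (Fin s) (Fin s) K) (Matrix (Fin s) (Fin s) K))
    have hS : Module.finrank K S ≤ (s - (c + m)) * (s - (c + m)) := by
      apply finrank_two_sided _ _ hΛY hΘX
      rintro _ ⟨ω, hω, rfl⟩
      obtain ⟨-, hx, hy, hl, ht⟩ := hk ω hω
      constructor
      · rw [Matrix.fromRows_mul]
        simp [hy, hl]
      · rw [Matrix.transpose_fromRows, Matrix.mul_fromCols]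
        simp [hx, ht]
    refine le_trans ?_ hS
    let ψ := (LinearMap.snd K (Matrix (Fin s) (Fin s) K) (Matrix (Fin s) (Fin s) K)).restrict
      (p := LinearMap.ker g) (q := S) (fun ω hω => ⟨ω, hω, rfl⟩)
    apply LinearMap.finrank_le_finrank_of_injective (f := ψ)
    intro a b hab
    apply Subtype.ext
    apply Prod.ext
    · rw [(hk a.1 a.2).1, (hk b.1 b.2).1]
    · exact congrArg Subtype.val hab
  rw [h3] at h2
  obtain ⟨d, rfl⟩ := Nat.exists_eq_add_of_le hmc
  have h5 : m + c + d - (c + m) = d := by omega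
  rw [h5] at h4
  have h1' : (Module.finrank K (LinearMap.range f) : ℝ) ≤
    ((m + c + d) * m + (m * (m + c + d) + (c * (m + c + d) + (m + c + d) * c))) := by
    exact_mod_cast h1
  have h2' : (Module.finrank K (LinearMap.range g) : ℝ) + Module.finrank K (LinearMap.ker g) =
    (m + c + d) * (m + c + d) + (m + c + d) * (m + c + d) := by exact_mod_cast h2
  have h4' : (Module.finrank K (LinearMap.ker g) : ℝ) ≤ d * d := by exact_mod_cast h4
  push_cast
  nlinarith
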